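/- arXiv:2207.01477 — 10 statements merged into one kernel-verified Lean document; each statement's English description precedes it below -/
import Mathlib

section
/- Let T be the set of the eight strictly increasing 4-tuples (1,2,3,4), (1,2,5,6), (1,3,5,7), (1,4,6,7), (2,3,5,8), (2,4,6,8), (3,4,7,8), (5,6,7,8), and let M be a finite multiset of elements of T. Suppose that for every t in {1,...,8}, the total number of occurrences of t among all entries of all tuples of M (counted with multiplicity) equals the total number of occurrences of 9−t. Then in M the multiplicity of (1,2,3,4) equals that of (5,6,7,8), the multiplicity of (1,2,5,6) equals that of (3,4,7,8), the multiplicity of (1,3,5,7) equals that of (2,4,6,8), and the multiplicity of (1,4,6,7) equals that of (2,3,5,8). -/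
/-- A sum over a multiset whose elements lie in a finset `s` is a sum over `s` weighted by
multiplicities. -/
theorem Multiset.sum_map_eq_sum_count_of_forall_mem {α β : Type*} [DecidableEq α]
    [AddCommMonoid β] {M : Multiset α} {s : Finset α} (h : ∀ a ∈ M, a ∈ s) (f : α → β) :
    (M.map f).sum = ∑ a ∈ s, M.count a • f a := by
  rw [Finset.sum_multiset_map_count]
  refine Finset.sum_subset (fun a ha => h a (Multiset.mem_toFinset.mp ha)) fun a _ ha => ?_
  rw [Multiset.count_eq_zero_of_notMem (mt Multiset.mem_toFinset.mpr ha), zero_smul]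

/-- in a torus-invariant multiset of rows of standard Young tableaux on
`Spin(8)/P^{α₄}`, complementary rows occur with equal multiplicity. -/
theorem complementary_rows_equal_multiplicity (M : Multiset (List ℕ))
    (hM : ∀ l ∈ M, l ∈ ([[1,2,3,4], [1,2,5,6], [1,3,5,7], [1,4,6,7],
        [2,3,5,8], [2,4,6,8], [3,4,7,8], [5,6,7,8]] : List (List ℕ)))
    (hocc : ∀ t ∈ Finset.Icc 1 8,
        (M.map (fun l => l.count t)).sum = (M.map (fun l => l.count (9 - t))).sum) :
    M.count [1,2,3,4] = M.count [5,6,7,8] ∧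
    M.count [1,2,5,6] = M.count [3,4,7,8] ∧
    M.count [1,3,5,7] = M.count [2,4,6,8] ∧
    M.count [1,4,6,7] = M.count [2,3,5,8] := by
  have key := fun t => Multiset.sum_map_eq_sum_count_of_forall_mem
    (fun l hl => List.mem_toFinset.mpr (hM l hl)) (fun l : List ℕ => l.count t)
  have h₁ := hocc 1 (by decide)
  have h₂ := hocc 2 (by decide)
  have h₃ := hocc 3 (by decide)
  have h₄ := hocc 4 (by decide)
  rw [key, key, List.sum_toFinset _ (by decide)] at h₁ h₂ h₃ h₄
  rw [List.sum_toFinset _ (by decide)] at h₁ h₂ h₃ h₄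
  simp at h₁ h₂ h₃ h₄
  omega
end

section
/- Let T be the set of the eight strictly increasing 4-tuples (1,2,3,4), (1,2,5,6), (1,3,5,7), (1,4,6,7), (2,3,5,8), (2,4,6,8), (3,4,7,8), (5,6,7,8), and let M be a nonempty finite multiset of elements of T such that for every t in {1,...,8}, the total number of occurrences of t among all entries of all tuples of M equals the total number of occurrences of 9−t. Then M contains one of the following four complementary pairs of tuples: {(1,2,3,4),(5,6,7,8)}, {(1,2,5,6),(3,4,7,8)}, {(1,3,5,7),(2,4,6,8)}, or {(1,4,6,7),(2,3,5,8)}. -/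
/-- A sum over a multiset supported in a finite set `S` is the sum over `S` weighted by
multiplicities. -/
theorem Multiset.sum_map_eq_sum_count_mul {α : Type*} [DecidableEq α] (M : Multiset α)
    (S : Finset α) (hS : ∀ a ∈ M, a ∈ S) (f : α → ℕ) :
    (M.map f).sum = ∑ a ∈ S, M.count a * f a := by
  rw [Finset.sum_multiset_map_count]
  simp only [smul_eq_mul]
  refine Finset.sum_subset (fun a ha => hS a (Multiset.mem_toFinset.mp ha)) fun a _ ha => ?_
  rw [Multiset.count_eq_zero_of_notMem (fun h => ha (Multiset.mem_toFinset.mpr h)), zero_mul]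

/-- every nonempty torus-invariant multiset of rows of standard Young
tableaux on `Spin(8)/P^{α₄}` contains a complementary pair of rows, i.e. every
torus-invariant standard monomial has a degree-one factor. -/
theorem torus_invariant_multiset_contains_complementary_pair (M : Multiset (List ℕ))
    (hne : M ≠ 0)
    (hM : ∀ l ∈ M, l ∈ ([[1,2,3,4], [1,2,5,6], [1,3,5,7], [1,4,6,7],
        [2,3,5,8], [2,4,6,8], [3,4,7,8], [5,6,7,8]] : List (List ℕ)))
    (hocc : ∀ t ∈ Finset.Icc 1 8,
        (M.map (fun l => l.count t)).sum = (M.map (fun l => l.count (9 - t))).sum) :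
    ([1,2,3,4] ∈ M ∧ [5,6,7,8] ∈ M) ∨
    ([1,2,5,6] ∈ M ∧ [3,4,7,8] ∈ M) ∨
    ([1,3,5,7] ∈ M ∧ [2,4,6,8] ∈ M) ∨
    ([1,4,6,7] ∈ M ∧ [2,3,5,8] ∈ M) := by
  have hsum := M.sum_map_eq_sum_count_mul
    {[1,2,3,4], [1,2,5,6], [1,3,5,7], [1,4,6,7], [2,3,5,8], [2,4,6,8], [3,4,7,8], [5,6,7,8]}
    (fun l hl => by simpa using hM l hl)
  have h₁ := hocc 1 (by decide)
  have h₂ := hocc 2 (by decide)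
  have h₃ := hocc 3 (by decide)
  have h₄ := hocc 4 (by decide)
  simp [hsum] at h₁ h₂ h₃ h₄
  obtain ⟨l, hl⟩ := Multiset.exists_mem_of_ne_zero hne
  have hmem := hM l hl
  simp only [List.mem_cons, List.not_mem_nil, or_false] at hmem
  simp only [← Multiset.count_pos] at hl ⊢
  rcases hmem with rfl | rfl | rfl | rfl | rfl | rfl | rfl | rfl <;> omega
end

section
/- Let n ≥ 2 and k ≥ 1 be integers, and let E : {1,...,2k} × {1,...,4n} → {1,...,8n} be an array such that: each row i ↦ E(i,j) is strictly increasing in j; each column j ↦ E(i,j) is weakly increasing in i; every value t in {1,...,8n} occurs exactly k times among the entries of E; E(2k,j) ≤ 2j for all 1 ≤ j ≤ 2n−3; and E(2k,2n−2) ≤ 4n−3. Then for every 1 ≤ j ≤ 2n−3 one has E(i,j) = 2j−1 for all 1 ≤ i ≤ k and E(i,j) = 2j for all k+1 ≤ i ≤ 2k; moreover E(i,2n−2) = 4n−5 for all 1 ≤ i ≤ k. -/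
open Finset in
/-- If every value `t ∈ {1, …, 2m}` occurs exactly `k` times in an array with `2k` rows and
positive entries, and the first `m` columns contain only values at most `2m`, then these columns
contain all of the values at most `2m`. -/
theorem entry_le_iff_column_le {k N m : ℕ} {E : ℕ → ℕ → ℕ} (hmN : m ≤ N)
    (hpos : ∀ i ∈ Icc 1 (2 * k), ∀ j ∈ Icc 1 N, 1 ≤ E i j)
    (hcount : ∀ t ∈ Icc 1 (2 * m), #{p ∈ Icc 1 (2 * k) ×ˢ Icc 1 N | E p.1 p.2 = t} = k)
    (hle : ∀ i ∈ Icc 1 (2 * k), ∀ j ∈ Icc 1 m, E i j ≤ 2 * m)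
    {i j : ℕ} (hi : i ∈ Icc 1 (2 * k)) (hj : j ∈ Icc 1 N) : E i j ≤ 2 * m ↔ j ≤ m := by
  have hcard : #{p ∈ Icc 1 (2 * k) ×ˢ Icc 1 N | E p.1 p.2 ≤ 2 * m} = 2 * m * k := by
    rw [card_eq_sum_card_fiberwise (f := fun p : ℕ × ℕ => E p.1 p.2) (t := Icc 1 (2 * m))]
    · calc _ = ∑ t ∈ Icc 1 (2 * m), k := by
            refine sum_congr rfl fun t ht => ?_
            rw [filter_filter]
            refine (congrArg card (filter_congr fun p _ => ?_)).trans (hcount t ht)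
            have := (mem_Icc.1 ht).2
            constructor <;> intro h <;> omega
        _ = 2 * m * k := by simp
    · intro p hp
      simp only [coe_filter, mem_product, Set.mem_ofPred_eq] at hp
      exact mem_coe.2 (mem_Icc.2 ⟨hpos _ hp.1.1 _ hp.1.2, hp.2⟩)
  have hsub : Icc 1 (2 * k) ×ˢ Icc 1 m ⊆
      {p ∈ Icc 1 (2 * k) ×ˢ Icc 1 N | E p.1 p.2 ≤ 2 * m} := by
    intro p hp
    rw [mem_product] at hp
    have hp2 := mem_Icc.1 hp.2
    exact mem_filter.2 ⟨mem_product.2 ⟨hp.1, mem_Icc.2 ⟨hp2.1, hp2.2.trans hmN⟩⟩,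
      hle _ hp.1 _ hp.2⟩
  have heq := eq_of_subset_of_card_le hsub (by
    rw [hcard, card_product, Nat.card_Icc, Nat.card_Icc]
    exact le_of_eq (by simp; ring))
  have hmem := Finset.ext_iff.1 heq (i, j)
  simp only [mem_product, mem_filter, hi, hj, true_and] at hmem
  rw [← hmem, mem_Icc]
  exact and_iff_right (mem_Icc.1 hj).1

open Finset in
/-- A lower set of positive integers with `k` elements is `{1, …, k}`. -/
theorem eq_Icc_of_isLowerSet_of_card {k : ℕ} {R : Finset ℕ} (hpos : ∀ i ∈ R, 1 ≤ i)
    (hlower : ∀ i ∈ R, ∀ i', 1 ≤ i' → i' ≤ i → i' ∈ R) (hcard : #R = k) : R = Icc 1 k := by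
  refine eq_of_subset_of_card_le (fun i hi => mem_Icc.2 ⟨hpos i hi, ?_⟩) (by simp [hcard])
  have hsub : Icc 1 i ⊆ R := fun i' hi' =>
    hlower i hi i' (mem_Icc.1 hi').1 (mem_Icc.1 hi').2
  simpa [hcard] using card_le_card hsub

open Finset in
/-- If the values at most `2m` are exactly those in the first `m` columns of a semistandard array,
and `2m + 1` occurs exactly `k` times, then it fills exactly the top `k` cells of
column `m + 1`. -/
theorem entry_eq_iff_row_le {r k N m : ℕ} {E : ℕ → ℕ → ℕ} (hmN : m + 1 ≤ N)
    (hrow : ∀ i ∈ Icc 1 r, ∀ j j', 1 ≤ j → j < j' → j' ≤ N → E i j < E i j')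
    (hcol : ∀ i i' j, 1 ≤ i → i ≤ i' → i' ≤ r → j ∈ Icc 1 N → E i j ≤ E i' j)
    (hcount : #{p ∈ Icc 1 r ×ˢ Icc 1 N | E p.1 p.2 = 2 * m + 1} = k)
    (hiff : ∀ i ∈ Icc 1 r, ∀ j ∈ Icc 1 N, (E i j ≤ 2 * m ↔ j ≤ m))
    {i : ℕ} (hi : i ∈ Icc 1 r) : E i (m + 1) = 2 * m + 1 ↔ i ≤ k := by
  have hm : m + 1 ∈ Icc 1 N := mem_Icc.2 ⟨by omega, hmN⟩
  have hge : ∀ i ∈ Icc 1 r, 2 * m + 1 ≤ E i (m + 1) := fun i hi => by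
    have := hiff i hi _ hm
    omega
  have hprod : ({p ∈ Icc 1 r ×ˢ Icc 1 N | E p.1 p.2 = 2 * m + 1} : Finset (ℕ × ℕ)) =
      {i ∈ Icc 1 r | E i (m + 1) = 2 * m + 1} ×ˢ {m + 1} := by
    ext ⟨a, b⟩
    simp only [mem_filter, mem_product, mem_singleton]
    constructor
    · rintro ⟨⟨ha, hb⟩, hab⟩
      have hb' := mem_Icc.1 hb
      have hlt := hiff a ha b hb
      have hbm : b = m + 1 := by
        by_contra hne
        have := hrow a ha (m + 1) b (by omega) (by omega) hb'.2
        have := hge a ha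
        omega
      subst hbm
      exact ⟨⟨ha, hab⟩, rfl⟩
    · rintro ⟨⟨ha, hab⟩, rfl⟩
      exact ⟨⟨ha, hm⟩, hab⟩
  rw [hprod, card_product, card_singleton, mul_one] at hcount
  have hR := eq_Icc_of_isLowerSet_of_card (fun i hi => (mem_Icc.1 (mem_filter.1 hi).1).1)
    (fun i hi i' h1 hle => by
      obtain ⟨hir, hval⟩ := mem_filter.1 hi
      have hir' := (mem_Icc.1 hir).2
      have hi' : i' ∈ Icc 1 r := mem_Icc.2 ⟨h1, hle.trans hir'⟩
      have := hcol i' i (m + 1) h1 hle hir' hm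
      have := hge i' hi'
      exact mem_filter.2 ⟨hi', by omega⟩) hcount
  have hmem := Finset.ext_iff.1 hR i
  simp only [mem_filter, hi, true_and] at hmem
  rw [hmem, mem_Icc]
  exact and_iff_right (mem_Icc.1 hi).1

/-- the first `2n-3` columns of a torus-invariant standard tableau on the
Schubert variety `X(w₆)` in `Spin(8n)/P^{α₄ₙ}` are forced, as is the top half of
column `2n-2`. -/
theorem first_columns_of_invariant_tableau_forced (n k : ℕ) (hn : 2 ≤ n) (hk : 1 ≤ k)
    (E : ℕ → ℕ → ℕ)
    (hrange : ∀ i j, 1 ≤ i → i ≤ 2*k → 1 ≤ j → j ≤ 4*n → 1 ≤ E i j ∧ E i j ≤ 8*n)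
    (hrow : ∀ i j j', 1 ≤ i → i ≤ 2*k → 1 ≤ j → j < j' → j' ≤ 4*n → E i j < E i j')
    (hcol : ∀ i i' j, 1 ≤ i → i ≤ i' → i' ≤ 2*k → 1 ≤ j → j ≤ 4*n → E i j ≤ E i' j)
    (hcount : ∀ t, 1 ≤ t → t ≤ 8*n →
      (((Finset.Icc 1 (2*k)) ×ˢ (Finset.Icc 1 (4*n))).filter
        (fun p => E p.1 p.2 = t)).card = k)
    (hbot : ∀ j, 1 ≤ j → j ≤ 2*n - 3 → E (2*k) j ≤ 2*j)
    (hbot' : E (2*k) (2*n - 2) ≤ 4*n - 3) :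
    (∀ j, 1 ≤ j → j ≤ 2*n - 3 →
      (∀ i, 1 ≤ i → i ≤ k → E i j = 2*j - 1) ∧
      (∀ i, k + 1 ≤ i → i ≤ 2*k → E i j = 2*j)) ∧
    (∀ i, 1 ≤ i → i ≤ k → E i (2*n - 2) = 4*n - 5) := by
  have hle : ∀ m ≤ 2 * n - 3, ∀ i ∈ Finset.Icc 1 (2 * k), ∀ j ∈ Finset.Icc 1 m,
      E i j ≤ 2 * m := fun m hm i hi j hj => by
    rw [Finset.mem_Icc] at hi hj
    have := hcol i (2 * k) j hi.1 hi.2 le_rfl hj.1 (by omega)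
    have := hbot j hj.1 (by omega)
    omega
  have hiff : ∀ m ≤ 2 * n - 3, ∀ i ∈ Finset.Icc 1 (2 * k), ∀ j ∈ Finset.Icc 1 (4 * n),
      (E i j ≤ 2 * m ↔ j ≤ m) := fun m hm i hi j hj =>
    entry_le_iff_column_le (by omega)
      (fun i hi j hj => by
        rw [Finset.mem_Icc] at hi hj
        exact (hrange i j hi.1 hi.2 hj.1 hj.2).1)
      (fun t ht => by
        rw [Finset.mem_Icc] at ht
        exact hcount t ht.1 (by omega))
      (hle m hm) hi hj
  have htop : ∀ m ≤ 2 * n - 3, ∀ i ∈ Finset.Icc 1 (2 * k),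
      (E i (m + 1) = 2 * m + 1 ↔ i ≤ k) := fun m hm i hi =>
    entry_eq_iff_row_le (by omega)
      (fun i hi j j' => by
        rw [Finset.mem_Icc] at hi
        exact hrow i j j' hi.1 hi.2)
      (fun i i' j h1 hii' h2 hj => by
        rw [Finset.mem_Icc] at hj
        exact hcol i i' j h1 hii' h2 hj.1 hj.2)
      (hcount (2 * m + 1) (by omega) (by omega)) (hiff m hm) hi
  refine ⟨fun j hj1 hj => ?_, fun i hi1 hi => ?_⟩
  · obtain ⟨m, rfl⟩ : ∃ m, j = m + 1 := ⟨j - 1, by omega⟩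
    refine ⟨fun i hi1 hi => ?_, fun i hi1 hi => ?_⟩
    · exact (htop m (by omega) i (Finset.mem_Icc.2 ⟨hi1, by omega⟩)).2 hi
    · have hi' : i ∈ Finset.Icc 1 (2 * k) := Finset.mem_Icc.2 ⟨by omega, hi⟩
      have hj' : m + 1 ∈ Finset.Icc 1 (4 * n) := Finset.mem_Icc.2 ⟨hj1, by omega⟩
      have := htop m (by omega) i hi'
      have := hiff m (by omega) i hi' _ hj'
      have := hiff (m + 1) hj i hi' _ hj'
      omega
  · have := (htop (2 * n - 3) le_rfl i (Finset.mem_Icc.2 ⟨hi1, by omega⟩)).2 hi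
    rw [show 2 * n - 2 = 2 * n - 3 + 1 by omega, this]
    omega
end

section
/- Let n ≥ 2 and k ≥ 1 be integers, and let E : {1,...,2k} × {1,...,4n} → {1,...,8n} be an array such that: each row is strictly increasing from left to right; each column is weakly increasing from top to bottom; every value t in {1,...,8n} occurs exactly k times among the entries of E; for every row i and every t in {1,...,4n}, exactly one of t and 8n+1−t occurs among the entries of row i; every row contains an even number of entries greater than 4n; and the bottom row (row 2k) is entrywise at most the tuple w6 = (2,4,...,4n−6, 4n−3, 4n+1, 4n+2, 4n+3, 4n+5, 4n+6, 4n+8, ..., 8n), i.e. whose j-th entry is 2j for 1 ≤ j ≤ 2n−3, then 4n−3, 4n+1, 4n+2, 4n+3, 4n+5, and then 4n+4+2(j−2n−2) for 2n+3 ≤ j ≤ 4n. Then the bottom row of E, which begins with 2,4,...,4n−6 in its first 2n−3 positions, continues with one of the following six tuples in positions 2n−2 through 4n: (4n−4,4n−2,4n,4n+2,4n+4,4n+6,4n+8,...,8n), (4n−3,4n−2,4n,4n+2,4n+5,4n+6,4n+8,...,8n), (4n−4,4n−1,4n,4n+3,4n+4,4n+6,4n+8,...,8n), (4n−3,4n−1,4n,4n+3,4n+5,4n+6,4n+8,...,8n),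 (4n−4,4n+1,4n+2,4n+3,4n+4,4n+6,4n+8,...,8n), or (4n−3,4n+1,4n+2,4n+3,4n+5,4n+6,4n+8,...,8n). -/
/-- If the columns of the first `m` rows of a tableau are weakly increasing, its last row is
strictly increasing, and every value between `1` and `N` occurs at most `k` times, then the `j`-th
entry `t` of the last row satisfies `m * j ≤ k * t`. -/
theorem mul_le_mul_last_row_entry (m c N k : ℕ) (E : ℕ → ℕ → ℕ)
    (hrange : ∀ i j, 1 ≤ i → i ≤ m → 1 ≤ j → j ≤ c → 1 ≤ E i j ∧ E i j ≤ N)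
    (hrow : ∀ j j', 1 ≤ j → j < j' → j' ≤ c → E m j < E m j')
    (hcol : ∀ i j, 1 ≤ i → i ≤ m → 1 ≤ j → j ≤ c → E i j ≤ E m j)
    (hcount : ∀ t, 1 ≤ t → t ≤ N →
      (((Finset.Icc 1 m) ×ˢ (Finset.Icc 1 c)).filter (fun p => E p.1 p.2 = t)).card ≤ k)
    (hm : 1 ≤ m) (j : ℕ) (hj : 1 ≤ j) (hjc : j ≤ c) :
    m * j ≤ k * E m j := by
  have hmaps : ∀ p ∈ Finset.Icc 1 m ×ˢ Finset.Icc 1 j,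
      E p.1 p.2 ∈ Finset.Icc 1 (E m j) := by
    rintro ⟨a, b⟩ hp
    simp only [Finset.mem_product, Finset.mem_Icc] at hp ⊢
    obtain ⟨⟨ha, ham⟩, hb, hbj⟩ := hp
    have hbm := hcol a b ha ham hb (hbj.trans hjc)
    refine ⟨(hrange a b ha ham hb (hbj.trans hjc)).1, hbm.trans ?_⟩
    rcases hbj.eq_or_lt with rfl | hlt
    · exact le_rfl
    · exact (hrow b j hb hlt hjc).le
  have hcard := Finset.card_le_mul_card_image_of_maps_to hmaps k (fun t ht => by
    rw [Finset.mem_Icc] at ht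
    refine le_trans (Finset.card_le_card ?_)
      (hcount t ht.1 (ht.2.trans (hrange m j hm le_rfl hj hjc).2))
    exact Finset.filter_subset_filter _
      (Finset.product_subset_product_right (Finset.Icc_subset_Icc_right hjc)))
  simpa using hcard

/-- If a sequence is strictly increasing on `[1, c]`, and its values first exceed `b` at position
`m + 1`, then exactly `c - m` of its values exceed `b`. -/
theorem card_filter_lt_of_strictMono (c b m : ℕ) (f : ℕ → ℕ)
    (hf : ∀ j j', 1 ≤ j → j < j' → j' ≤ c → f j < f j')
    (hmc : m + 1 ≤ c) (hle : f m ≤ b) (hlt : b < f (m + 1)) :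
    ((Finset.Icc 1 c).filter (fun j => b < f j)).card = c - m := by
  have hset : (Finset.Icc 1 c).filter (fun j => b < f j) = Finset.Icc (m + 1) c := by
    ext j
    simp only [Finset.mem_filter, Finset.mem_Icc]
    constructor
    · rintro ⟨⟨hj, hjc⟩, hb⟩
      refine ⟨?_, hjc⟩
      by_contra! hjm
      rcases (Nat.lt_succ_iff.mp hjm).eq_or_lt with rfl | hlt'
      · omega
      · have := hf j m hj hlt' (by omega)
        omega
    · rintro ⟨hj, hjc⟩
      refine ⟨⟨by omega, hjc⟩, ?_⟩
      rcases hj.eq_or_lt with rfl | hlt'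
      · exact hlt
      · exact hlt.trans (hf _ j (by omega) hlt' hjc)
  rw [hset, Nat.card_Icc]
  omega

/-- the six possibilities for the bottom row of a torus-invariant standard
tableau on the Schubert variety `X(w₆)` in `Spin(8n)/P^{α₄ₙ}`. -/
theorem bottom_row_of_invariant_tableau_six_cases (n k : ℕ) (hn : 2 ≤ n) (hk : 1 ≤ k)
    (E : ℕ → ℕ → ℕ)
    (hrange : ∀ i j, 1 ≤ i → i ≤ 2*k → 1 ≤ j → j ≤ 4*n → 1 ≤ E i j ∧ E i j ≤ 8*n)
    (hrow : ∀ i j j', 1 ≤ i → i ≤ 2*k → 1 ≤ j → j < j' → j' ≤ 4*n → E i j < E i j')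
    (hcol : ∀ i i' j, 1 ≤ i → i ≤ i' → i' ≤ 2*k → 1 ≤ j → j ≤ 4*n → E i j ≤ E i' j)
    (hcount : ∀ t, 1 ≤ t → t ≤ 8*n →
      (((Finset.Icc 1 (2*k)) ×ˢ (Finset.Icc 1 (4*n))).filter
        (fun p => E p.1 p.2 = t)).card = k)
    (hpair : ∀ i, 1 ≤ i → i ≤ 2*k → ∀ t, 1 ≤ t → t ≤ 4*n →
      Xor' (∃ j, 1 ≤ j ∧ j ≤ 4*n ∧ E i j = t)
           (∃ j, 1 ≤ j ∧ j ≤ 4*n ∧ E i j = 8*n + 1 - t))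
    (heven : ∀ i, 1 ≤ i → i ≤ 2*k →
      Even (((Finset.Icc 1 (4*n)).filter (fun j => 4*n < E i j)).card))
    (hbot : ∀ j, 1 ≤ j → j ≤ 4*n → E (2*k) j ≤
      (if j = 2*n - 2 then 4*n - 3 else if j = 2*n - 1 then 4*n + 1
        else if j = 2*n then 4*n + 2 else if j = 2*n + 1 then 4*n + 3
        else if j = 2*n + 2 then 4*n + 5 else 2*j)) :
    (∀ j, 1 ≤ j → j ≤ 2*n - 3 → E (2*k) j = 2*j) ∧
    ((∀ j, 2*n - 2 ≤ j → j ≤ 4*n → E (2*k) j = 2*j) ∨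
     (∀ j, 2*n - 2 ≤ j → j ≤ 4*n → E (2*k) j =
        (if j = 2*n - 2 then 4*n - 3 else if j = 2*n + 2 then 4*n + 5 else 2*j)) ∨
     (∀ j, 2*n - 2 ≤ j → j ≤ 4*n → E (2*k) j =
        (if j = 2*n - 1 then 4*n - 1 else if j = 2*n + 1 then 4*n + 3 else 2*j)) ∨
     (∀ j, 2*n - 2 ≤ j → j ≤ 4*n → E (2*k) j =
        (if j = 2*n - 2 then 4*n - 3 else if j = 2*n - 1 then 4*n - 1
          else if j = 2*n + 1 then 4*n + 3 else if j = 2*n + 2 then 4*n + 5 else 2*j)) ∨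
     (∀ j, 2*n - 2 ≤ j → j ≤ 4*n → E (2*k) j =
        (if j = 2*n - 1 then 4*n + 1 else if j = 2*n then 4*n + 2
          else if j = 2*n + 1 then 4*n + 3 else 2*j)) ∨
     (∀ j, 2*n - 2 ≤ j → j ≤ 4*n → E (2*k) j =
        (if j = 2*n - 2 then 4*n - 3 else if j = 2*n - 1 then 4*n + 1
          else if j = 2*n then 4*n + 2 else if j = 2*n + 1 then 4*n + 3
          else if j = 2*n + 2 then 4*n + 5 else 2*j))) := by
  have hlow : ∀ j, 1 ≤ j → j ≤ 4*n → 2*j ≤ E (2*k) j := by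
    intro j hj hjn
    have h := mul_le_mul_last_row_entry (2*k) (4*n) (8*n) k E hrange
      (fun j j' => hrow _ j j' (by omega) le_rfl) (fun i j hi hik => hcol i _ j hi hik le_rfl)
      (fun t ht htn => (hcount t ht htn).le) (by omega) j hj hjn
    refine Nat.le_of_mul_le_mul_left ?_ hk
    linarith
  have hne : ∀ j j', 1 ≤ j → j ≤ 4*n → 1 ≤ j' → j' ≤ 4*n → E (2*k) j ≤ 4*n →
      E (2*k) j + E (2*k) j' ≠ 8*n + 1 := by
    intro j j' hj hjn hj' hjn' hle hsum
    have hpos := (hrange (2*k) j (by omega) le_rfl hj hjn).1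
    rcases hpair (2*k) (by omega) le_rfl (E (2*k) j) hpos hle with h | h
    · exact h.2 ⟨j', hj', hjn', by omega⟩
    · exact h.2 ⟨j, hj, hjn, rfl⟩
  have hparity : ¬ (E (2*k) (2*n - 1) ≤ 4*n ∧ 4*n < E (2*k) (2*n)) := by
    rintro ⟨hle, hlt⟩
    have hcard := card_filter_lt_of_strictMono (4*n) (4*n) (2*n - 1) (E (2*k))
      (fun j j' => hrow _ j j' (by omega) le_rfl) (by omega) hle
      (by rwa [show 2*n - 1 + 1 = 2*n by omega])
    obtain ⟨r, hr⟩ := heven (2*k) (by omega) le_rfl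
    omega
  have hout : ∀ j, 1 ≤ j → j ≤ 4*n → (j < 2*n - 2 ∨ 2*n + 2 < j) → E (2*k) j = 2*j := by
    intro j hj hjn hside
    have hl := hlow j hj hjn
    have hu := hbot j hj hjn
    split_ifs at hu <;> omega
  refine ⟨fun j hj hjn => hout j hj (by omega) (by omega), ?_⟩
  have la := hlow (2*n - 2) (by omega) (by omega)
  have lb := hlow (2*n - 1) (by omega) (by omega)
  have lc := hlow (2*n) (by omega) (by omega)
  have ld := hlow (2*n + 1) (by omega) (by omega)
  have lend := hlow (2*n + 2) (by omega) (by omega)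
  have ua : E (2*k) (2*n - 2) ≤ 4*n - 3 := by
    simpa using hbot (2*n - 2) (by omega) (by omega)
  have ub : E (2*k) (2*n - 1) ≤ 4*n + 1 := by
    have h := hbot (2*n - 1) (by omega) (by omega)
    split_ifs at h <;> omega
  have uc : E (2*k) (2*n) ≤ 4*n + 2 := by
    have h := hbot (2*n) (by omega) (by omega)
    split_ifs at h <;> omega
  have ud : E (2*k) (2*n + 1) ≤ 4*n + 3 := by
    have h := hbot (2*n + 1) (by omega) (by omega)
    split_ifs at h <;> omega
  have ue : E (2*k) (2*n + 2) ≤ 4*n + 5 := by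
    have h := hbot (2*n + 2) (by omega) (by omega)
    split_ifs at h <;> omega
  have hbc := hrow (2*k) (2*n - 1) (2*n) (by omega) le_rfl (by omega) (by omega) (by omega)
  have hcd := hrow (2*k) (2*n) (2*n + 1) (by omega) le_rfl (by omega) (by omega) (by omega)
  have hae := hne (2*n - 2) (2*n + 2) (by omega) (by omega) (by omega) (by omega) (by omega)
  have hbd := hne (2*n - 1) (2*n + 1) (by omega) (by omega) (by omega) (by omega)
  have hends : (E (2*k) (2*n - 2) = 4*n - 4 ∧ E (2*k) (2*n + 2) = 4*n + 4) ∨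
      (E (2*k) (2*n - 2) = 4*n - 3 ∧ E (2*k) (2*n + 2) = 4*n + 5) := by
    omega
  have hmid : (E (2*k) (2*n - 1) = 4*n - 2 ∧ E (2*k) (2*n) = 4*n ∧
        E (2*k) (2*n + 1) = 4*n + 2) ∨
      (E (2*k) (2*n - 1) = 4*n - 1 ∧ E (2*k) (2*n) = 4*n ∧ E (2*k) (2*n + 1) = 4*n + 3) ∨
      (E (2*k) (2*n - 1) = 4*n + 1 ∧ E (2*k) (2*n) = 4*n + 2 ∧
        E (2*k) (2*n + 1) = 4*n + 3) := by
    omega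
  have hcover : ∀ g : ℕ → ℕ, E (2*k) (2*n - 2) = g (2*n - 2) → E (2*k) (2*n - 1) = g (2*n - 1) →
      E (2*k) (2*n) = g (2*n) → E (2*k) (2*n + 1) = g (2*n + 1) →
      E (2*k) (2*n + 2) = g (2*n + 2) → (∀ j, 2*n + 2 < j → g j = 2*j) →
      ∀ j, 2*n - 2 ≤ j → j ≤ 4*n → E (2*k) j = g j := by
    intro g ga gb gc gd ge gout j hj hjn
    by_cases hbig : 2*n + 2 < j
    · rw [gout j hbig, hout j (by omega) hjn (Or.inr hbig)]
    · obtain rfl | rfl | rfl | rfl | rfl : j = 2*n - 2 ∨ j = 2*n - 1 ∨ j = 2*n ∨ j = 2*n + 1 ∨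
        j = 2*n + 2 := by omega
      all_goals assumption
  rcases hends with ⟨ha, he⟩ | ⟨ha, he⟩ <;>
    rcases hmid with ⟨hb, hc, hd⟩ | ⟨hb, hc, hd⟩ | ⟨hb, hc, hd⟩
  · refine Or.inl (hcover _ ?_ ?_ ?_ ?_ ?_ fun _ _ => rfl) <;> omega
  · refine Or.inr (Or.inr (Or.inl (hcover _ ?_ ?_ ?_ ?_ ?_ ?_))) <;>
      intros <;> split_ifs <;> omega
  · refine Or.inr (Or.inr (Or.inr (Or.inr (Or.inl (hcover _ ?_ ?_ ?_ ?_ ?_ ?_))))) <;>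
      intros <;> split_ifs <;> omega
  · refine Or.inr (Or.inl (hcover _ ?_ ?_ ?_ ?_ ?_ ?_)) <;>
      intros <;> split_ifs <;> omega
  · refine Or.inr (Or.inr (Or.inr (Or.inl (hcover _ ?_ ?_ ?_ ?_ ?_ ?_)))) <;>
      intros <;> split_ifs <;> omega
  · refine Or.inr (Or.inr (Or.inr (Or.inr (Or.inr (hcover _ ?_ ?_ ?_ ?_ ?_ ?_))))) <;>
      intros <;> split_ifs <;> omega
end

section
/- Let n ≥ 2 and k ≥ 1 be integers, and let E : {1,...,2k} × {1,...,4n} → {1,...,8n} be an array such that: each row is strictly increasing from left to right; each column is weakly increasing from top to bottom; every value t in {1,...,8n} occurs exactly k times among the entries of E; for every row i and every t in {1,...,4n}, exactly one of t and 8n+1−t occurs among the entries of row i; and the bottom row (row 2k) has j-th entry equal to 2j for every 1 ≤ j ≤ 4n. Then E(i,j) = 2j−1 for all 1 ≤ i ≤ k and all 1 ≤ j ≤ 4n, and E(i,j) = 2j for all k+1 ≤ i ≤ 2k and all 1 ≤ j ≤ 4n; in particular the top row is (1,3,5,...,8n−1). -/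
/-- Case I: if the bottom row of a torus-invariant standard tableau on
`Spin(8n)/P^{α₄ₙ}` is `(2,4,…,8n)`, then the whole tableau is determined: the top `k`
rows all equal `(1,3,…,8n-1)` and the bottom `k` rows all equal `(2,4,…,8n)`. -/
theorem tableau_determined_by_even_bottom_row (n k : ℕ) (hn : 2 ≤ n) (hk : 1 ≤ k)
    (E : ℕ → ℕ → ℕ)
    (hrange : ∀ i j, 1 ≤ i → i ≤ 2*k → 1 ≤ j → j ≤ 4*n → 1 ≤ E i j ∧ E i j ≤ 8*n)
    (hrow : ∀ i j j', 1 ≤ i → i ≤ 2*k → 1 ≤ j → j < j' → j' ≤ 4*n → E i j < E i j')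
    (hcol : ∀ i i' j, 1 ≤ i → i ≤ i' → i' ≤ 2*k → 1 ≤ j → j ≤ 4*n → E i j ≤ E i' j)
    (hcount : ∀ t, 1 ≤ t → t ≤ 8*n →
      (((Finset.Icc 1 (2*k)) ×ˢ (Finset.Icc 1 (4*n))).filter
        (fun p => E p.1 p.2 = t)).card = k)
    (hpair : ∀ i, 1 ≤ i → i ≤ 2*k → ∀ t, 1 ≤ t → t ≤ 4*n →
      Xor' (∃ j, 1 ≤ j ∧ j ≤ 4*n ∧ E i j = t)
           (∃ j, 1 ≤ j ∧ j ≤ 4*n ∧ E i j = 8*n + 1 - t))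
    (hbot : ∀ j, 1 ≤ j → j ≤ 4*n → E (2*k) j = 2*j) :
    (∀ i j, 1 ≤ i → i ≤ k → 1 ≤ j → j ≤ 4*n → E i j = 2*j - 1) ∧
    (∀ i j, k + 1 ≤ i → i ≤ 2*k → 1 ≤ j → j ≤ 4*n → E i j = 2*j) := by
  have hle : ∀ i j, 1 ≤ i → i ≤ 2*k → 1 ≤ j → j ≤ 4*n → E i j ≤ 2*j := by
    intro i j hi hi' hj hj'
    have h := hcol i (2*k) j hi hi' le_rfl hj hj'
    rwa [hbot j hj hj'] at h
  -- The cells with entry at most `2m` are exactly those in the first `m` columns.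
  have hcells : ∀ m, m ≤ 4*n → (Finset.Icc 1 (2*k)) ×ˢ (Finset.Icc 1 m) =
      ((Finset.Icc 1 (2*k)) ×ˢ (Finset.Icc 1 (4*n))).filter (fun p => E p.1 p.2 ≤ 2*m) := by
    intro m hm
    apply Finset.eq_of_subset_of_card_le
    · rintro ⟨i, j⟩ hp
      simp only [Finset.mem_product, Finset.mem_Icc, Finset.mem_filter] at hp ⊢
      have := hle i j (by omega) (by omega) (by omega) (by omega)
      omega
    · rw [Finset.card_eq_sum_card_fiberwise (f := fun p => E p.1 p.2)
        (t := Finset.Icc 1 (2*m))]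
      · have hfiber : ∀ t ∈ Finset.Icc 1 (2*m),
            ((((Finset.Icc 1 (2*k)) ×ˢ (Finset.Icc 1 (4*n))).filter
              (fun p => E p.1 p.2 ≤ 2*m)).filter (fun p => E p.1 p.2 = t)).card ≤ k := by
          intro t ht
          rw [Finset.mem_Icc] at ht
          exact (Finset.card_le_card
            (Finset.filter_subset_filter _ (Finset.filter_subset _ _))).trans
            (hcount t ht.1 (by omega)).le
        refine (Finset.sum_le_sum hfiber).trans (le_of_eq ?_)
        simp
        ring
      · rintro ⟨i, j⟩ hp
        simp only [Finset.coe_filter, Set.mem_ofPred_eq, Finset.mem_product, Finset.mem_Icc,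
          Finset.coe_Icc, Set.mem_Icc] at hp ⊢
        have := hrange i j (by omega) (by omega) (by omega) (by omega)
        omega
  have hge : ∀ i j, 1 ≤ i → i ≤ 2*k → 1 ≤ j → j ≤ 4*n → 2*j - 1 ≤ E i j := by
    intro i j hi hi' hj hj'
    by_contra hlt
    have hmem : (i, j) ∈ (Finset.Icc 1 (2*k)) ×ˢ (Finset.Icc 1 (j-1)) := by
      rw [hcells (j-1) (by omega)]
      simp only [Finset.mem_product, Finset.mem_Icc, Finset.mem_filter]
      omega
    simp only [Finset.mem_product, Finset.mem_Icc] at hmem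
    omega
  constructor
  · intro i j hi hik hj hj'
    have hup := hle i j hi (by omega) hj hj'
    have hlow := hge i j hi (by omega) hj hj'
    by_contra hne
    have hsub : ((Finset.Icc 1 (2*k)) ×ˢ (Finset.Icc 1 (4*n))).filter
        (fun p => E p.1 p.2 = 2*j - 1) ⊆ (Finset.Icc 1 (i-1)) ×ˢ {j} := by
      rintro ⟨a, b⟩ hp
      simp only [Finset.mem_product, Finset.mem_Icc, Finset.mem_filter,
        Finset.mem_singleton] at hp ⊢
      have hup' := hle a b (by omega) (by omega) (by omega) (by omega)
      have hlow' := hge a b (by omega) (by omega) (by omega) (by omega)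
      obtain rfl : b = j := by omega
      have hai : a < i := by
        by_contra hia
        have := hcol i a b hi (by omega) (by omega) hj hj'
        omega
      omega
    have hcard := Finset.card_le_card hsub
    rw [hcount _ (by omega) (by omega)] at hcard
    simp at hcard
    omega
  · intro i j hik hi' hj hj'
    have hup := hle i j (by omega) hi' hj hj'
    have hlow := hge i j (by omega) hi' hj hj'
    by_contra hne
    have hsub : (Finset.Icc 1 i) ×ˢ {j} ⊆ ((Finset.Icc 1 (2*k)) ×ˢ (Finset.Icc 1 (4*n))).filter
        (fun p => E p.1 p.2 = 2*j - 1) := by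
      rintro ⟨a, b⟩ hp
      simp only [Finset.mem_product, Finset.mem_Icc, Finset.mem_filter,
        Finset.mem_singleton] at hp ⊢
      obtain ⟨⟨ha, hai⟩, rfl⟩ := hp
      have := hcol a i b ha hai hi' hj hj'
      have := hge a b ha (by omega) hj hj'
      omega
    have hcard := Finset.card_le_card hsub
    rw [hcount _ (by omega) (by omega)] at hcard
    simp at hcard
    omega
end

section
/- Let n ≥ 4 and k ≥ 1 be integers and let r(1) ≤ r(2) ≤ ... ≤ r(4k) be a weakly increasing sequence of integers with values in {1,...,2n} such that: r(2i−1) = r(2i) for every 1 ≤ i ≤ 2k; whenever both r(2i) and r(2i+1) lie in {n, n+1} one has r(2i) ≡ r(2i+1) (mod 2); and for every t in {1,...,2n} the number of indices i with r(i) = t equals the number of indices i with r(i) = 2n+1−t. Then no r(i) lies in {n, n+1}, and there exists j with 1 ≤ j ≤ n−1 such that r(1) = r(2) = j and r(4k−1) = r(4k) = 2n+1−j. -/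
/-- a single-column `Spin(2n,ℂ)`-standard torus-invariant tableau of shape
`(4k)` avoids the values `n, n+1` and has a degree-one factor `(j,j,2n+1-j,2n+1-j)`. -/
theorem spin_column_tableau_degree_one_factor (n k : ℕ) (hn : 4 ≤ n) (hk : 1 ≤ k)
    (r : ℕ → ℕ)
    (hmono : ∀ i i', 1 ≤ i → i ≤ i' → i' ≤ 4*k → r i ≤ r i')
    (hrange : ∀ i, 1 ≤ i → i ≤ 4*k → 1 ≤ r i ∧ r i ≤ 2*n)
    (hpair : ∀ i, 1 ≤ i → i ≤ 2*k → r (2*i - 1) = r (2*i))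
    (hmod : ∀ i, 1 ≤ i → i ≤ 2*k - 1 →
      (r (2*i) = n ∨ r (2*i) = n + 1) → (r (2*i + 1) = n ∨ r (2*i + 1) = n + 1) →
      r (2*i) % 2 = r (2*i + 1) % 2)
    (hcount : ∀ t, 1 ≤ t → t ≤ 2*n →
      ((Finset.Icc 1 (4*k)).filter (fun i => r i = t)).card =
      ((Finset.Icc 1 (4*k)).filter (fun i => r i = 2*n + 1 - t)).card) :
    (∀ i, 1 ≤ i → i ≤ 4*k → r i ≠ n ∧ r i ≠ n + 1) ∧
    (∃ j, 1 ≤ j ∧ j ≤ n - 1 ∧ r 1 = j ∧ r 2 = j ∧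
      r (4*k - 1) = 2*n + 1 - j ∧ r (4*k) = 2*n + 1 - j) := by
  have hsymm : ∀ i, 1 ≤ i → i ≤ 4*k → ∃ i', 1 ≤ i' ∧ i' ≤ 4*k ∧ r i' = 2*n + 1 - r i := by
    intro i h1 h2
    have hpos : 0 < ((Finset.Icc 1 (4*k)).filter (fun i' => r i' = r i)).card :=
      Finset.card_pos.mpr ⟨i, by simp [h1, h2]⟩
    rw [hcount (r i) (hrange i h1 h2).1 (hrange i h1 h2).2] at hpos
    obtain ⟨i', hi'⟩ := Finset.card_pos.mp hpos
    simp only [Finset.mem_filter, Finset.mem_Icc] at hi'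
    exact ⟨i', hi'.1.1, hi'.1.2, hi'.2⟩
  have hnot_both : ∀ a b, 1 ≤ a → a ≤ 4*k → 1 ≤ b → b ≤ 4*k → r a = n → r b = n + 1 → False := by
    intro a b ha1 ha2 hb1 hb2 ha hb
    -- At the first index whose value exceeds `n`, either `hpair` or `hmod` is violated.
    have hex : ∃ c, 1 ≤ c ∧ n + 1 ≤ r c := ⟨b, hb1, hb.ge⟩
    obtain ⟨c, ⟨hc1, hc⟩, hmin⟩ :
        ∃ c, (1 ≤ c ∧ n + 1 ≤ r c) ∧ ∀ d < c, ¬ (1 ≤ d ∧ n + 1 ≤ r d) :=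
      ⟨Nat.find hex, Nat.find_spec hex, fun _ => Nat.find_min hex⟩
    have hcb : c ≤ b := by
      by_contra! h
      exact hmin b h ⟨hb1, hb.ge⟩
    have hrc : r c = n + 1 := by
      have := hmono c b hc1 hcb hb2
      omega
    have hac : a < c := by
      by_contra! h
      have := hmono c a hc1 h ha2
      omega
    have hrpred : r (c - 1) = n := by
      have hle := hmono a (c - 1) ha1 (by omega) (by omega)
      have hlt := hmin (c - 1) (by omega)
      omega
    obtain ⟨m, rfl | rfl⟩ := Nat.even_or_odd' c
    · have := hpair m (by omega) (by omega)
      omega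
    · rw [Nat.add_sub_cancel] at hrpred
      have := hmod m (by omega) (by omega) (Or.inl hrpred) (Or.inr hrc)
      omega
  have havoid : ∀ i, 1 ≤ i → i ≤ 4*k → r i ≠ n ∧ r i ≠ n + 1 := by
    intro i h1 h2
    obtain ⟨i', h1', h2', hi'⟩ := hsymm i h1 h2
    exact ⟨fun h => hnot_both i i' h1 h2 h1' h2' h (by omega),
      fun h => hnot_both i' i h1' h2' h1 h2 (by omega) h⟩
  refine ⟨havoid, r 1, (hrange 1 le_rfl (by omega)).1, ?_⟩
  obtain ⟨a, ha1, ha2, ha⟩ := hsymm 1 le_rfl (by omega)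
  obtain ⟨b, hb1, hb2, hb⟩ := hsymm (4*k) (by omega) le_rfl
  have hle_last := hmono a (4*k) ha1 ha2 le_rfl
  have hfirst_le := hmono 1 b le_rfl hb1 hb2
  have hfirst_last := hmono 1 (4*k) le_rfl (by omega) le_rfl
  have hrange_first := hrange 1 le_rfl (by omega)
  have hrange_last := hrange (4*k) (by omega) le_rfl
  have hne := havoid 1 le_rfl (by omega)
  have hpair_first : r 1 = r 2 := hpair 1 le_rfl (by omega)
  have hpair_last := hpair (2*k) (by omega) le_rfl
  rw [show 2 * (2 * k) = 4 * k by ring] at hpair_last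
  refine ⟨?_, rfl, ?_, ?_, ?_⟩ <;> omega
end

section
/- Let φ : ℂ[z1, z2, z3, z4, z5, z6, z7, z8, z9, z10] → ℂ[x1, x2, x3, x4] be the ℂ-algebra homomorphism determined by z1 ↦ x1², z2 ↦ x2², z3 ↦ x3², z4 ↦ x4², z5 ↦ x1x2, z6 ↦ x1x3, z7 ↦ x1x4, z8 ↦ x2x3, z9 ↦ x2x4, z10 ↦ x3x4. Then the kernel of φ is the ideal of ℂ[z1,...,z10] generated by the twenty elements z1z2 − z5², z1z3 − z6², z1z4 − z7², z1z8 − z5z6, z1z9 − z5z7, z1z10 − z6z7, z2z3 − z8², z2z4 − z9², z2z6 − z5z8, z2z7 − z5z9, z2z10 − z8z9, z3z4 − z10², z3z5 − z6z8, z3z7 − z6z10, z3z9 − z8z10, z4z5 − z7z9, z4z6 − z7z10, z4z8 − z9z10, z5z10 − z6z9, z6z9 − z7z8. -/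
open MvPolynomial

/-- The position of the variable `z` mapping to `xᵢ * xⱼ`. -/
def veroneseIndex : Fin 4 → Fin 4 → Fin 10 :=
  ![![0, 4, 5, 6], ![4, 1, 7, 8], ![5, 7, 2, 9], ![6, 8, 9, 3]]

lemma veroneseIndex_comm (i j : Fin 4) : veroneseIndex i j = veroneseIndex j i := by
  revert i j; decide

lemma exists_veroneseIndex_eq (k : Fin 10) : ∃ i j, veroneseIndex i j = k := by
  revert k; decide

section PairProd

variable {ι A : Type*} [CommRing A]

/-- The product of `z` over consecutive pairs of a list, with value `0` in odd length. -/
def pairProd (z : ι → ι → A) : List ι → A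
  | [] => 1
  | [_] => 0
  | i :: j :: l => z i j * pairProd z l

lemma pairProd_perm {z : ι → ι → A} (hcomm : ∀ i j, z i j = z j i)
    (hexch : ∀ i j k l, z i j * z k l = z i k * z j l) {l l' : List ι} (h : l.Perm l') :
    pairProd z l = pairProd z l' ∧ ∀ a, pairProd z (a :: l) = pairProd z (a :: l') := by
  induction h with
  | nil => exact ⟨rfl, fun _ => rfl⟩
  | cons x _ ih => exact ⟨ih.2 x, fun a => by simp only [pairProd, ih.1]⟩
  | swap x y l =>
    refine ⟨by simp only [pairProd, hcomm x y], fun a => ?_⟩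
    cases l with
    | nil => simp [pairProd]
    | cons w l => simp only [pairProd, ← mul_assoc, hexch a y x w]
  | trans _ _ ih₁ ih₂ => exact ⟨ih₁.1.trans ih₂.1, fun a => (ih₁.2 a).trans (ih₂.2 a)⟩

/-- A linear functional sending `1` to `1` and turning multiplication by `xᵢ * xⱼ` into
multiplication by `z i j`. -/
lemma exists_linearMap_X_mul_X {R : Type*} [CommRing R] [Algebra R A] {z : ι → ι → A}
    (hcomm : ∀ i j, z i j = z j i) (hexch : ∀ i j k l, z i j * z k l = z i k * z j l) :
    ∃ ψ : MvPolynomial ι R →ₗ[R] A, ψ 1 = 1 ∧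
      ∀ i j p, ψ (X i * X j * p) = z i j * ψ p := by
  let N : Multiset ι → A := Quot.lift (pairProd z) fun _ _ h => (pairProd_perm hcomm hexch h).1
  have hN (i j : ι) (s : Multiset ι) : N (i ::ₘ j ::ₘ s) = z i j * N s :=
    Quot.inductionOn s fun _ => rfl
  let ψ : MvPolynomial ι R →ₗ[R] A :=
    (basisMonomials ι R).constr R fun e => N (Finsupp.toMultiset e)
  have hψ (e : ι →₀ ℕ) : ψ (monomial e 1) = N (Finsupp.toMultiset e) := by
    simpa only [coe_basisMonomials] using (basisMonomials ι R).constr_basis R _ e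
  refine ⟨ψ, ?_, fun i j p => ?_⟩
  · rw [← C_1, C_apply, hψ, map_zero]
    rfl
  · suffices ψ ∘ₗ LinearMap.mulLeft R (X i * X j) = LinearMap.mulLeft R (z i j) ∘ₗ ψ from
      LinearMap.congr_fun this p
    refine (basisMonomials ι R).ext fun e => ?_
    simp only [coe_basisMonomials, LinearMap.comp_apply, LinearMap.mulLeft_apply]
    rw [X, X, monomial_mul, monomial_mul, one_mul, one_mul, hψ, hψ, ← hN]
    simp only [map_add, Finsupp.toMultiset_single, one_smul, add_assoc, Multiset.singleton_add]

end PairProd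

lemma aeval_X_veroneseIndex (i j : Fin 4) :
    (aeval ![(X 0 ^ 2 : MvPolynomial (Fin 4) ℂ), X 1 ^ 2, X 2 ^ 2, X 3 ^ 2,
        X 0 * X 1, X 0 * X 2, X 0 * X 3, X 1 * X 2, X 1 * X 3, X 2 * X 3] :
        MvPolynomial (Fin 10) ℂ →ₐ[ℂ] MvPolynomial (Fin 4) ℂ) (X (veroneseIndex i j)) =
      X i * X j := by
  rw [aeval_X]
  fin_cases i <;> fin_cases j <;> simp [veroneseIndex] <;> ring

set_option maxHeartbeats 1000000 in
lemma mul_veroneseIndex_exchange {A : Type*} [CommRing A] {y : Fin 10 → A}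
    (h0 : y 0 * y 1 = y 4 ^ 2) (h1 : y 0 * y 2 = y 5 ^ 2) (h2 : y 0 * y 3 = y 6 ^ 2)
    (h3 : y 0 * y 7 = y 4 * y 5) (h4 : y 0 * y 8 = y 4 * y 6) (h5 : y 0 * y 9 = y 5 * y 6)
    (h6 : y 1 * y 2 = y 7 ^ 2) (h7 : y 1 * y 3 = y 8 ^ 2) (h8 : y 1 * y 5 = y 4 * y 7)
    (h9 : y 1 * y 6 = y 4 * y 8) (h10 : y 1 * y 9 = y 7 * y 8) (h11 : y 2 * y 3 = y 9 ^ 2)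
    (h12 : y 2 * y 4 = y 5 * y 7) (h13 : y 2 * y 6 = y 5 * y 9) (h14 : y 2 * y 8 = y 7 * y 9)
    (h15 : y 3 * y 4 = y 6 * y 8) (h16 : y 3 * y 5 = y 6 * y 9) (h17 : y 3 * y 7 = y 8 * y 9)
    (h18 : y 4 * y 9 = y 5 * y 8) (h19 : y 5 * y 8 = y 6 * y 7)
    (i j k l : Fin 4) :
    y (veroneseIndex i j) * y (veroneseIndex k l) =
      y (veroneseIndex i k) * y (veroneseIndex j l) := by
  fin_cases i <;> fin_cases j <;> fin_cases k <;> fin_cases l <;>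
    simp only [veroneseIndex, Fin.zero_eta, Fin.mk_one, Fin.reduceFinMk, Matrix.cons_val] <;>
    first | rfl | exact mul_comm _ _ | grind


/-- the kernel of `ℂ[z₁,…,z₁₀] → ℂ[x₁,…,x₄]` (with `zᵢ = X (i-1)`,
`xᵢ = X (i-1)`), `z₁ ↦ x₁²`, `z₂ ↦ x₂²`, `z₃ ↦ x₃²`, `z₄ ↦ x₄²`, `z₅ ↦ x₁x₂`,
`z₆ ↦ x₁x₃`, `z₇ ↦ x₁x₄`, `z₈ ↦ x₂x₃`, `z₉ ↦ x₂x₄`, `z₁₀ ↦ x₃x₄`, is generated by the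
twenty listed quadrics (degree-2 Veronese of ℙ³). -/
theorem kernel_veronese_P3 :
    RingHom.ker (aeval ![(X 0 ^ 2 : MvPolynomial (Fin 4) ℂ), X 1 ^ 2, X 2 ^ 2, X 3 ^ 2,
        X 0 * X 1, X 0 * X 2, X 0 * X 3, X 1 * X 2, X 1 * X 3, X 2 * X 3] :
        MvPolynomial (Fin 10) ℂ →ₐ[ℂ] MvPolynomial (Fin 4) ℂ) =
      Ideal.span ({X 0 * X 1 - X 4 ^ 2, X 0 * X 2 - X 5 ^ 2, X 0 * X 3 - X 6 ^ 2,
        X 0 * X 7 - X 4 * X 5, X 0 * X 8 - X 4 * X 6, X 0 * X 9 - X 5 * X 6,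
        X 1 * X 2 - X 7 ^ 2, X 1 * X 3 - X 8 ^ 2, X 1 * X 5 - X 4 * X 7,
        X 1 * X 6 - X 4 * X 8, X 1 * X 9 - X 7 * X 8, X 2 * X 3 - X 9 ^ 2,
        X 2 * X 4 - X 5 * X 7, X 2 * X 6 - X 5 * X 9, X 2 * X 8 - X 7 * X 9,
        X 3 * X 4 - X 6 * X 8, X 3 * X 5 - X 6 * X 9, X 3 * X 7 - X 8 * X 9,
        X 4 * X 9 - X 5 * X 8, X 5 * X 8 - X 6 * X 7} :
        Set (MvPolynomial (Fin 10) ℂ)) := by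
  apply le_antisymm
  · intro p hp
    generalize hI : (Ideal.span _ : Ideal (MvPolynomial (Fin 10) ℂ)) = I
    have hφ := aeval_X_veroneseIndex
    generalize (aeval _ : MvPolynomial (Fin 10) ℂ →ₐ[ℂ] MvPolynomial (Fin 4) ℂ) = φ at hp hφ
    have hrel := hI.le
    simp only [Ideal.span_le, Set.insert_subset_iff, Set.singleton_subset_iff, SetLike.mem_coe,
      ← Ideal.Quotient.eq, map_mul, map_pow] at hrel
    obtain ⟨h0, h1, h2, h3, h4, h5, h6, h7, h8, h9, h10, h11, h12, h13, h14, h15,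
      h16, h17, h18, h19⟩ := hrel
    obtain ⟨ψ, hψ₁, hψ⟩ := exists_linearMap_X_mul_X (R := ℂ)
      (z := fun i j => Ideal.Quotient.mk I (X (veroneseIndex i j)))
      (fun i j => by rw [veroneseIndex_comm])
      (mul_veroneseIndex_exchange (y := fun k => Ideal.Quotient.mk I (X k))
        h0 h1 h2 h3 h4 h5 h6 h7 h8 h9 h10 h11 h12 h13 h14 h15 h16 h17 h18 h19)
    have key (q : MvPolynomial (Fin 10) ℂ) : ψ (φ q) = Ideal.Quotient.mk I q := by
      induction q using MvPolynomial.induction_on with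
      | C a =>
        rw [← algebraMap_eq, AlgHom.commutes, Algebra.algebraMap_eq_smul_one, map_smul, hψ₁]
        exact (Algebra.algebraMap_eq_smul_one a).symm
      | add q r hq hr => rw [map_add, map_add, map_add, hq, hr]
      | mul_X q k hq =>
        obtain ⟨i, j, rfl⟩ := exists_veroneseIndex_eq k
        rw [map_mul, hφ, mul_comm, hψ, hq, map_mul, mul_comm]
    rw [← Ideal.Quotient.eq_zero_iff_mem, ← key, RingHom.mem_ker.1 hp, map_zero]
  · rw [Ideal.span_le]
    intro p hp
    simp only [Set.mem_insert_iff, Set.mem_singleton_iff] at hp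
    rw [SetLike.mem_coe, RingHom.mem_ker]
    rcases hp with rfl | rfl | rfl | rfl | rfl | rfl | rfl | rfl | rfl | rfl | rfl | rfl | rfl | rfl | rfl | rfl | rfl | rfl | rfl | rfl <;>
      · simp only [map_sub, map_mul, map_pow, aeval_X, Matrix.cons_val]
        ring
end

section
/- Let I be the ideal of the polynomial ring ℂ[z1,...,z10] generated by the twenty elements z1z2 − z5², z1z3 − z6², z1z4 − z7², z1z8 − z5z6, z1z9 − z5z7, z1z10 − z6z7, z2z3 − z8², z2z4 − z9², z2z6 − z5z8, z2z7 − z5z9, z2z10 − z8z9, z3z4 − z10², z3z5 − z6z8, z3z7 − z6z10, z3z9 − z8z10, z4z5 − z7z9, z4z6 − z7z10, z4z8 − z9z10, z5z10 − z6z9, z6z9 − z7z8. Then the Krull dimension of the quotient ring ℂ[z1,...,z10]/I equals 4. -/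
open MvPolynomial

/-- Every chain of primes lifts along an integral extension, by lying over and going up. -/
theorem Algebra.IsIntegral.exists_ltSeries_comap_last_eq {R S : Type*} [CommRing R] [CommRing S]
    [Algebra R S] [Algebra.IsIntegral R S] [FaithfulSMul R S] (l : LTSeries (PrimeSpectrum R)) :
    ∃ L : LTSeries (PrimeSpectrum S),
      L.length = l.length ∧ PrimeSpectrum.comap (algebraMap R S) L.last = l.last := by
  induction l using RelSeries.inductionOn' with
  | singleton p =>
    obtain ⟨Q, -, hQ, hQp⟩ := Ideal.exists_ideal_over_prime_of_isIntegral p.asIdeal (⊥ : Ideal S)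
      (by simp [← RingHom.ker_eq_comap_bot])
    exact ⟨RelSeries.singleton _ ⟨Q, hQ⟩, rfl, PrimeSpectrum.ext hQp⟩
  | snoc l p hp ih =>
    obtain ⟨L, hlen, hlast⟩ := ih
    have hlt : l.last < p := hp
    rw [← hlast] at hlt
    obtain ⟨Q, hLQ, hQ, hQp⟩ := Ideal.exists_ideal_over_prime_of_isIntegral p.asIdeal
      L.last.asIdeal hlt.le
    have hLlt : L.last < ⟨Q, hQ⟩ := by
      refine lt_of_le_of_ne hLQ fun h ↦ hlt.ne ?_
      rw [h]
      exact PrimeSpectrum.ext hQp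
    exact ⟨L.snoc ⟨Q, hQ⟩ hLlt, by simp [hlen], by simpa using PrimeSpectrum.ext hQp⟩

/-- An integral extension of commutative rings preserves the Krull dimension. -/
theorem Algebra.IsIntegral.ringKrullDim_eq {R S : Type*} [CommRing R] [CommRing S]
    [Algebra R S] [Algebra.IsIntegral R S] [FaithfulSMul R S] :
    ringKrullDim S = ringKrullDim R := by
  refine le_antisymm (Order.krullDim_le_of_strictMono (PrimeSpectrum.comap (algebraMap R S))
    fun p q h ↦ Ideal.IsIntegral.comap_lt_comap (R := R) (I := p.asIdeal) (J := q.asIdeal) h)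
    (iSup_le fun l ↦ ?_)
  obtain ⟨L, hlen, -⟩ := Algebra.IsIntegral.exists_ltSeries_comap_last_eq (S := S) l
  exact hlen ▸ Order.LTSeries.length_le_krullDim L

theorem RingHom.isIntegralElem_of_map_eq_pow {R S : Type*} [CommRing R] [CommRing S] (f : R →+* S)
    {r : R} {s : S} {n : ℕ} (hn : n ≠ 0) (h : f r = s ^ n) : f.IsIntegralElem s := by
  refine ⟨Polynomial.X ^ n - Polynomial.C r, Polynomial.monic_X_pow_sub_C r hn, ?_⟩
  rw [Polynomial.eval₂_sub, Polynomial.eval₂_X_pow, Polynomial.eval₂_C, h, sub_self]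

/-- An injective homomorphism to `k[σ] ⧸ I` over whose image every variable is integral
preserves the Krull dimension. -/
theorem MvPolynomial.ringKrullDim_quotient_eq_of_isIntegralElem_X {k σ R : Type*} [CommRing k]
    [CommRing R] [Algebra k R] {I : Ideal (MvPolynomial σ k)}
    (f : R →ₐ[k] MvPolynomial σ k ⧸ I) (hf : Function.Injective f)
    (hX : ∀ i, (f : R →+* MvPolynomial σ k ⧸ I).IsIntegralElem (Ideal.Quotient.mk I (X i))) :
    ringKrullDim (MvPolynomial σ k ⧸ I) = ringKrullDim R := by
  algebraize [(f : R →+* MvPolynomial σ k ⧸ I)]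
  have : FaithfulSMul R (MvPolynomial σ k ⧸ I) := (faithfulSMul_iff_algebraMap_injective _ _).mpr hf
  have : Algebra.IsIntegral R (MvPolynomial σ k ⧸ I) := by
    refine ⟨fun x ↦ ?_⟩
    obtain ⟨p, rfl⟩ := Ideal.Quotient.mk_surjective x
    induction p using MvPolynomial.induction_on with
    | C a =>
      have h : Ideal.Quotient.mk I (C a) = algebraMap R _ (algebraMap k R a) :=
        (f.commutes a).symm
      exact h ▸ isIntegral_algebraMap
    | add p q hp hq => exact map_add (Ideal.Quotient.mk I) p q ▸ hp.add hq
    | mul_X p i hp => exact map_mul (Ideal.Quotient.mk I) p (X i) ▸ hp.mul (hX i)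
  exact Algebra.IsIntegral.ringKrullDim_eq

/-- The monomials of degree two in four variables, squares first. -/
noncomputable def veroneseMonomial : Fin 10 → MvPolynomial (Fin 4) ℂ :=
  ![X 0 ^ 2, X 1 ^ 2, X 2 ^ 2, X 3 ^ 2,
    X 0 * X 1, X 0 * X 2, X 0 * X 3, X 1 * X 2, X 1 * X 3, X 2 * X 3]

/-- An ideal that vanishes on the Veronese cone, and modulo which each `X i` with `4 ≤ i` squares to
a product of two of `X 0, …, X 3`, has a quotient of Krull dimension four. -/
theorem ringKrullDim_quotient_eq_four {I : Ideal (MvPolynomial (Fin 10) ℂ)}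
    (hker : I ≤ RingHom.ker (aeval (R := ℂ) veroneseMonomial))
    (hsq : ∀ i : Fin 10, ∃ a b : Fin 4,
      X (a.castLE (by decide)) * X (b.castLE (by decide)) - X i ^ 2 ∈ I ∨ i = a.castLE (by decide)) :
    ringKrullDim (MvPolynomial (Fin 10) ℂ ⧸ I) = 4 := by
  let f : MvPolynomial (Fin 4) ℂ →ₐ[ℂ] MvPolynomial (Fin 10) ℂ ⧸ I :=
    (Ideal.Quotient.mkₐ ℂ I).comp (rename (Fin.castLE (by decide)))
  let g : (MvPolynomial (Fin 10) ℂ ⧸ I) →ₐ[ℂ] MvPolynomial (Fin 4) ℂ :=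
    Ideal.Quotient.liftₐ I (aeval veroneseMonomial) fun _ h ↦ hker h
  have hfX (a : Fin 4) : f (X a) = Ideal.Quotient.mk I (X (a.castLE (by decide))) := by
    simp [f]
  have hgf : g.comp f = expand 2 := by
    ext1 a
    have hg : g (f (X a)) = veroneseMonomial (a.castLE (by decide)) := by
      rw [hfX]
      exact aeval_X _ _
    rw [AlgHom.comp_apply, hg, expand_X]
    fin_cases a <;> rfl
  have hf : Function.Injective f := by
    refine Function.Injective.of_comp (f := g) ?_
    rw [← AlgHom.coe_comp, hgf]
    exact expand_injective two_pos
  rw [ringKrullDim_quotient_eq_of_isIntegralElem_X f hf, ringKrullDim_of_isNoetherianRing]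
  · simp
  intro i
  obtain ⟨a, b, h | rfl⟩ := hsq i
  · refine RingHom.isIntegralElem_of_map_eq_pow _ (r := X a * X b) two_ne_zero ?_
    rw [RingHom.coe_coe, map_mul, hfX, hfX, ← map_mul, ← map_pow]
    exact (Ideal.Quotient.mk_eq_mk_iff_sub_mem _ _).mpr h
  · rw [← hfX]
    exact RingHom.isIntegralElem_map _

/-- the quotient of `ℂ[z₁,…,z₁₀]` (with `zᵢ = X (i-1)`) by the ideal
generated by the twenty listed quadrics has Krull dimension 4. -/
theorem krullDim_veronese_cone_P3 :
    ringKrullDim (MvPolynomial (Fin 10) ℂ ⧸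
      Ideal.span ({X 0 * X 1 - X 4 ^ 2, X 0 * X 2 - X 5 ^ 2, X 0 * X 3 - X 6 ^ 2,
        X 0 * X 7 - X 4 * X 5, X 0 * X 8 - X 4 * X 6, X 0 * X 9 - X 5 * X 6,
        X 1 * X 2 - X 7 ^ 2, X 1 * X 3 - X 8 ^ 2, X 1 * X 5 - X 4 * X 7,
        X 1 * X 6 - X 4 * X 8, X 1 * X 9 - X 7 * X 8, X 2 * X 3 - X 9 ^ 2,
        X 2 * X 4 - X 5 * X 7, X 2 * X 6 - X 5 * X 9, X 2 * X 8 - X 7 * X 9,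
        X 3 * X 4 - X 6 * X 8, X 3 * X 5 - X 6 * X 9, X 3 * X 7 - X 8 * X 9,
        X 4 * X 9 - X 5 * X 8, X 5 * X 8 - X 6 * X 7} :
        Set (MvPolynomial (Fin 10) ℂ))) = 4 := by
  apply ringKrullDim_quotient_eq_four
  · rw [Ideal.span_le]
    intro p hp
    simp only [Set.mem_insert_iff, Set.mem_singleton_iff] at hp
    rcases hp with rfl | rfl | rfl | rfl | rfl | rfl | rfl | rfl | rfl | rfl | rfl | rfl | rfl |
      rfl | rfl | rfl | rfl | rfl | rfl | rfl <;>
    · simp [veroneseMonomial]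
      ring
  · intro i
    fin_cases i
    · exact ⟨0, 0, .inr rfl⟩
    · exact ⟨1, 1, .inr rfl⟩
    · exact ⟨2, 2, .inr rfl⟩
    · exact ⟨3, 3, .inr rfl⟩
    · exact ⟨0, 1, .inl (Ideal.subset_span (by simp))⟩
    · exact ⟨0, 2, .inl (Ideal.subset_span (by simp))⟩
    · exact ⟨0, 3, .inl (Ideal.subset_span (by simp))⟩
    · exact ⟨1, 2, .inl (Ideal.subset_span (by simp))⟩
    · exact ⟨1, 3, .inl (Ideal.subset_span (by simp))⟩
    · refine ⟨2, 3, .inl (Ideal.subset_span ?_)⟩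
      iterate 11 right
      exact .inl rfl
end

section
/- Let I be the ideal of the polynomial ring ℂ[z1, z2, z3, z4, z5, z6] generated by the six elements z1z2 − z4², z1z3 − z5², z2z3 − z6², z1z6 − z4z5, z2z5 − z4z6, z3z4 − z5z6. Then the Krull dimension of the quotient ring ℂ[z1,...,z6]/I equals 3. -/
open MvPolynomial

/-- An injective integral ring homomorphism preserves the Krull dimension. -/
theorem RingHom.IsIntegral.ringKrullDim_eq {R S : Type*} [CommRing R] [CommRing S] {f : R →+* S}
    (hf : f.IsIntegral) (hinj : Function.Injective f) : ringKrullDim S = ringKrullDim R := by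
  algebraize [f]
  have : FaithfulSMul R S := (faithfulSMul_iff_algebraMap_injective R S).mpr hinj
  apply le_antisymm
  · exact Order.krullDim_le_of_strictMono (PrimeSpectrum.comap (algebraMap R S))
      fun _ _ h ↦ Ideal.IsIntegral.comap_lt_comap h
  · refine iSup_le fun l ↦ ?_
    obtain ⟨P, hP, hPl⟩ := Ideal.nonempty_primesOver (S := S) l.head.asIdeal
    obtain ⟨L, hL, -⟩ := Ideal.exists_ltSeries_of_hasGoingUp l P
    exact hL ▸ le_iSup (fun p : LTSeries (PrimeSpectrum S) ↦ (p.length : WithBot ℕ∞)) L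

theorem RingHom.isIntegralElem_of_sq_eq {R S : Type*} [CommRing R] [CommRing S] (f : R →+* S)
    {x : S} {a : R} (h : x ^ 2 = f a) : f.IsIntegralElem x :=
  ⟨Polynomial.X ^ 2 - Polynomial.C a, Polynomial.monic_X_pow_sub_C a two_ne_zero, by simp [h]⟩

/-- the quotient of `ℂ[z₁,…,z₆]` (with `zᵢ = X (i-1)`) by the ideal
generated by the six listed quadrics has Krull dimension 3. -/
theorem krullDim_veronese_cone_P2 :
    ringKrullDim (MvPolynomial (Fin 6) ℂ ⧸
      Ideal.span ({X 0 * X 1 - X 3 ^ 2, X 0 * X 2 - X 4 ^ 2, X 1 * X 2 - X 5 ^ 2,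
        X 0 * X 5 - X 3 * X 4, X 1 * X 4 - X 3 * X 5, X 2 * X 3 - X 4 * X 5} :
        Set (MvPolynomial (Fin 6) ℂ))) = 3 := by
  set I := Ideal.span ({X 0 * X 1 - X 3 ^ 2, X 0 * X 2 - X 4 ^ 2, X 1 * X 2 - X 5 ^ 2,
        X 0 * X 5 - X 3 * X 4, X 1 * X 4 - X 3 * X 5, X 2 * X 3 - X 4 * X 5} :
        Set (MvPolynomial (Fin 6) ℂ)) with hI
  let ι : MvPolynomial (Fin 3) ℂ →ₐ[ℂ] MvPolynomial (Fin 6) ℂ ⧸ I :=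
    (Ideal.Quotient.mkₐ ℂ I).comp (aeval ![X 0, X 1, X 2])
  -- The Veronese parametrization `(s, t, u) ↦ (s², t², u², st, su, tu)`.
  let v : MvPolynomial (Fin 6) ℂ →ₐ[ℂ] MvPolynomial (Fin 3) ℂ :=
    aeval ![X 0 ^ 2, X 1 ^ 2, X 2 ^ 2, X 0 * X 1, X 0 * X 2, X 1 * X 2]
  have hv : ∀ p ∈ I, v p = 0 := by
    suffices I ≤ RingHom.ker v from this
    rw [hI, Ideal.span_le]
    rintro p (rfl | rfl | rfl | rfl | rfl | rfl) <;> simp [v, RingHom.mem_ker] <;> ring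
  have hinj : Function.Injective ι := by
    have hcomp : (Ideal.Quotient.liftₐ I v hv).comp ι = expand 2 := by
      ext i : 1
      change v (aeval ![X 0, X 1, X 2] (X i)) = _
      fin_cases i <;> simp [v]
    refine Function.Injective.of_comp (f := Ideal.Quotient.liftₐ I v hv) ?_
    rw [← AlgHom.coe_comp, hcomp]
    exact expand_injective two_pos
  have hsq {a b c : MvPolynomial (Fin 6) ℂ} (h : a * b - c ^ 2 ∈ I) :
      Ideal.Quotient.mk I c ^ 2 = Ideal.Quotient.mk I a * Ideal.Quotient.mk I b := by
    rw [← map_mul, ← map_pow]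
    exact (Ideal.Quotient.eq.mpr h).symm
  have hmap {x : MvPolynomial (Fin 6) ℂ ⧸ I} (a : MvPolynomial (Fin 3) ℂ) (h : ι a = x) :
      ι.toRingHom.IsIntegralElem x :=
    h ▸ ι.toRingHom.isIntegralElem_map
  have hint : ι.toRingHom.IsIntegral := by
    intro x
    obtain ⟨p, rfl⟩ := Ideal.Quotient.mk_surjective x
    induction p using MvPolynomial.induction_on with
    | C a => exact hmap (C a) (ι.commutes a)
    | add p q hp hq => exact map_add (Ideal.Quotient.mk I) p q ▸ hp.add _ hq
    | mul_X p i hp =>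
      refine map_mul (Ideal.Quotient.mk I) p (X i) ▸ hp.mul _ ?_
      fin_cases i
      · exact hmap (X 0) (by simp [ι])
      · exact hmap (X 1) (by simp [ι])
      · exact hmap (X 2) (by simp [ι])
      · refine ι.toRingHom.isIntegralElem_of_sq_eq (a := X 0 * X 1) ?_
        simpa [ι] using hsq (Ideal.subset_span (by simp))
      · refine ι.toRingHom.isIntegralElem_of_sq_eq (a := X 0 * X 2) ?_
        simpa [ι] using hsq (Ideal.subset_span (by simp))
      · refine ι.toRingHom.isIntegralElem_of_sq_eq (a := X 1 * X 2) ?_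
        simpa [ι] using hsq (Ideal.subset_span (by simp))
  rw [hint.ringKrullDim_eq hinj]
  simp
end

section
/- Let M be a commutative monoid, let x1, x2, x3, x4, x5, x6, y ∈ M, and let m1,...,m6, n, k be natural numbers with m1+m2+m3+m4+m5+m6+2n = 2k. Then the element x1^{m1}·x2^{m2}·x3^{m3}·x4^{m4}·x5^{m5}·x6^{m6}·y^{n} can be written as a product of exactly k elements of M, each of which is either of the form x_i·x_j for some (not necessarily distinct) indices i, j in {1,...,6}, or equal to y. -/
/-- A product over a list of even length is a product of half as many pairwise products. -/
theorem List.exists_prod_eq_prod_map_of_length_eq_two_mul {ι M : Type*} [Monoid M] (x : ι → M) :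
    ∀ (k : ℕ) (l : List ι), l.length = 2 * k →
      ∃ L : List M, L.length = k ∧ (∀ z ∈ L, ∃ i j, z = x i * x j) ∧ L.prod = (l.map x).prod
  | 0, l, h => ⟨[], rfl, by simp, by simp [List.length_eq_zero_iff.mp h]⟩
  | _ + 1, [], h => by simp at h
  | _ + 1, [_], h => by simp at h; omega
  | k + 1, i :: j :: l, h => by
    obtain ⟨L, hlen, hL, hprod⟩ :=
      exists_prod_eq_prod_map_of_length_eq_two_mul x k l (by simp at h; omega)
    refine ⟨x i * x j :: L, by simp [hlen], ?_, by simp [hprod, mul_assoc]⟩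
    intro z hz
    rcases List.mem_cons.mp hz with rfl | hz
    · exact ⟨i, j, rfl⟩
    · exact hL z hz

/-- in a commutative monoid, if `m₁ + ⋯ + m₆ + 2n = 2k`, then
`x₁^{m₁} ⋯ x₆^{m₆} · yⁿ` is a product of exactly `k` factors, each of which is a
product `xᵢ · xⱼ` of two of the `x`'s (indices possibly equal) or the element `y`. -/
theorem prod_pow_eq_prod_of_pairs_and_y (M : Type*) [CommMonoid M]
    (x : Fin 6 → M) (y : M) (m : Fin 6 → ℕ) (n k : ℕ)
    (h : (∑ i, m i) + 2 * n = 2 * k) :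
    ∃ L : List M, L.length = k ∧
      (∀ z ∈ L, (∃ i j : Fin 6, z = x i * x j) ∨ z = y) ∧
      L.prod = (∏ i, x i ^ m i) * y ^ n := by
  let s : Multiset (Fin 6) := ∑ i, Multiset.replicate (m i) i
  have hcard : s.toList.length = 2 * (k - n) := by
    simp only [s, Multiset.length_toList, Multiset.card_sum, Multiset.card_replicate]
    omega
  have hmap : (s.toList.map x).prod = ∏ i, x i ^ m i := by
    rw [Multiset.prod_map_toList]
    simp only [s, ← Multiset.coe_mapAddMonoidHom, map_sum, Multiset.prod_sum]
    simp
  obtain ⟨L, hlen, hL, hprod⟩ :=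
    List.exists_prod_eq_prod_map_of_length_eq_two_mul x (k - n) s.toList hcard
  refine ⟨L ++ List.replicate n y, ?_, ?_, by simp [hprod, hmap]⟩
  · rw [List.length_append, List.length_replicate, hlen]
    omega
  · intro z hz
    rcases List.mem_append.mp hz with hz | hz
    · exact Or.inl (hL z hz)
    · exact Or.inr (List.eq_of_mem_replicate hz)
end
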